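/- Assume the number-field distortion setup. Then for every 0 ≤ j ≤ J, every a ∈ O_K, and every nonzero ideal I ⊆ O_K dividing Q, one has P_j({b + Q ∈ O_K/Q : b ≡ a mod I}) ≤ (1/N(I)) · ∏_{1 ≤ i ≤ j, p_i | I} (1 − δ_i)^{−1}. -/

import Mathlib

/-!
The proof is by induction on `j`. Write `q_j` for the image of `Q_j` in `R = 𝓞 K ⧸ Q`, so that the
fibres of `π_j` are the cosets of `q_j`. An ideal `I_i` with `P_min(I_i) = p_j` divides `Q_j`, so
`𝓑_j` is a union of cosets of `q_j`; hence `P_j` is invariant under translation by `q_j`. Since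
`P_j` is constant on the fibres of `π_j`, passing to `P_{j+1}` preserves the mass of each such
fibre (`sum_distort`).

For `j = 0` the bound is the equality `|I / Q| / |𝓞 K / Q| = 1 / N(I)` (`card_map_mk_div`). In the
step from `j` to `j + 1`:

* if `p_{j+1} ∣ I`, the pointwise bound `P_{j+1} ≤ P_j / (1 - δ_{j+1})` (`distort_le`) gives
  the additional factor;
* if `p_{j+1} ∤ I`, then `I + Q_{j+1} = I + Q_j`. Averages of a `q_{j+1}`-invariant function over a
  class modulo `I` and over the class modulo `I + Q_{j+1}` containing it agree (`cosetSum_sup`),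
  and the latter is a union of fibres of `π_j`, whose mass is preserved. So `P_{j+1}` and `P_j`
  give the class modulo `I` the same mass (`cosetSum_congr_of_sup_eq`).
-/

set_option maxHeartbeats 1000000
set_option synthInstance.maxHeartbeats 1000000

open scoped Classical
open NumberField

/-- `p` is the unique prime ideal factor of `I` of largest norm. -/
def IsPmin {K : Type*} [Field K] [NumberField K] (I p : Ideal (𝓞 K)) : Prop :=
  p.IsPrime ∧ p ∣ I ∧ ∀ q : Ideal (𝓞 K), q.IsPrime → q ∣ I → q ≠ p →
    Ideal.absNorm q < Ideal.absNorm p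

/-- A nonzero proper ideal is distinguishable if it has a unique prime factor of largest norm. -/
def Distinguishable {K : Type*} [Field K] [NumberField K] (I : Ideal (𝓞 K)) : Prop :=
  I ≠ ⊥ ∧ I ≠ ⊤ ∧ ∃ p : Ideal (𝓞 K), IsPmin I p

/-! ### Averaging over cosets in a finite ring -/

section Averaging

variable {R : Type*} [CommRing R] [Fintype R]

/-- The sum of `f` over the coset `c + M`. -/
noncomputable def cosetSum (M : Ideal R) (c : R) (f : R → ℝ) : ℝ :=
  ∑ x ∈ Finset.univ.filter (fun x : R => x - c ∈ M), f x

theorem cosetSum_eq_sum_ideal (M : Ideal R) (c : R) (f : R → ℝ) :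
    cosetSum M c f = ∑ h : M, f (c + h) := by
  unfold cosetSum
  symm
  refine Finset.sum_bij (fun (h : M) _ => c + (h : R)) ?_ ?_ ?_ ?_
  · intro h _
    simp
  · intro h₁ _ h₂ _ h
    exact Subtype.ext (add_left_cancel h)
  · intro x hx
    refine ⟨⟨x - c, (Finset.mem_filter.mp hx).2⟩, Finset.mem_univ _, by simp⟩
  · intro h _
    rfl

theorem cosetSum_translate (M : Ideal R) (c : R) (f : R → ℝ) {m : R} (hm : m ∈ M) :
    cosetSum M (c + m) f = cosetSum M c f := by
  unfold cosetSum
  congr 1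
  ext x
  simp only [Finset.mem_filter, Finset.mem_univ, true_and]
  have e : x - (c + m) = (x - c) - m := by ring
  rw [e]
  exact ⟨fun h => by simpa using M.add_mem h hm, fun h => M.sub_mem h hm⟩

/-- Averaging `f` over `L ≤ M` first does not change its sum over a coset of `M`. -/
theorem cosetSum_average {L M : Ideal R} (hLM : L ≤ M) (c : R) (f : R → ℝ) :
    ∑ m : M, cosetSum L (c + m) f = Fintype.card L * cosetSum M c f := by
  simp only [cosetSum_eq_sum_ideal L]
  rw [Finset.sum_comm]
  have key : ∀ l : L, ∑ m : M, f (c + m + l) = cosetSum M c f := by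
    intro l
    rw [← cosetSum_translate M c f (hLM l.2), cosetSum_eq_sum_ideal]
    refine Finset.sum_congr rfl fun m _ => ?_
    congr 1
    ring
  simp [key]

/-- If `f` is invariant under translation by `L`, its averages over `c + H` and over
`c + (H + L)` agree. -/
theorem cosetSum_sup (H L : Ideal R) (c : R) (f : R → ℝ)
    (hf : ∀ x, ∀ l ∈ L, f (x + l) = f x) :
    (Fintype.card H : ℝ) * cosetSum (H ⊔ L) c f =
      Fintype.card (H ⊔ L : Ideal R) * cosetSum H c f := by
  rw [← cosetSum_average (le_sup_left : H ≤ H ⊔ L)]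
  have key : ∀ y : (H ⊔ L : Ideal R), cosetSum H (c + y) f = cosetSum H c f := by
    intro y
    obtain ⟨h, hh, l, hl, hy⟩ := Submodule.mem_sup.mp y.2
    rw [← hy, ← cosetSum_translate H c f hh, cosetSum_eq_sum_ideal, cosetSum_eq_sum_ideal]
    refine Finset.sum_congr rfl fun m _ => ?_
    rw [← hf (c + h + m) l hl]
    congr 1
    ring
  simp [key]

/-- Two functions with equal sums on all cosets of `L` have equal sums on the cosets of any
larger ideal. -/
theorem cosetSum_congr_of_le {L M : Ideal R} (hLM : L ≤ M) (f g : R → ℝ)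
    (h : ∀ x, cosetSum L x f = cosetSum L x g) (c : R) :
    cosetSum M c f = cosetSum M c g := by
  have hpos : (Fintype.card L : ℝ) ≠ 0 := by
    exact_mod_cast Fintype.card_ne_zero
  apply mul_left_cancel₀ hpos
  rw [← cosetSum_average hLM, ← cosetSum_average hLM]
  exact Finset.sum_congr rfl fun m _ => h _

/-- If `f`, `g` are `L'`-invariant with equal sums on all cosets of `L`, then their sums agree on
cosets of any `H` with `H + L' = H + L`. -/
theorem cosetSum_congr_of_sup_eq {H L L' : Ideal R} (hsup : H ⊔ L' = H ⊔ L) (f g : R → ℝ)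
    (hf : ∀ x, ∀ l ∈ L', f (x + l) = f x) (hg : ∀ x, ∀ l ∈ L', g (x + l) = g x)
    (h : ∀ x, cosetSum L x f = cosetSum L x g) (c : R) :
    cosetSum H c f = cosetSum H c g := by
  have hpos : (Fintype.card (H ⊔ L' : Ideal R) : ℝ) ≠ 0 := by
    exact_mod_cast Fintype.card_ne_zero
  apply mul_left_cancel₀ hpos
  rw [← cosetSum_sup H L' c f hf, ← cosetSum_sup H L' c g hg,
    cosetSum_congr_of_le (hsup ▸ le_sup_right : L ≤ H ⊔ L') f g h c]

theorem cosetSum_one (M : Ideal R) (c : R) :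
    cosetSum M c (fun _ => (1 : ℝ)) = Fintype.card M := by
  rw [cosetSum_eq_sum_ideal]
  simp

end Averaging

/-! ### One step of the distortion -/

/-- The value at a point of the distorted weight, in terms of the old weight `w`, the density `α`
of the removed set in the fibre, the threshold `δ`, and whether the point is removed (`b`). -/
noncomputable def distort (w α δ : ℝ) (b : Prop) [Decidable b] : ℝ :=
  if α < δ then (if b then 0 else w / (1 - α))
  else if α = 0 then w
  else w * (α - (if b then δ else 0)) / (α * (1 - δ))

theorem distort_nonneg {w α δ : ℝ} (b : Prop) [Decidable b] (hw : 0 ≤ w) (hα : 0 ≤ α)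
    (hδ : δ ≤ 1 / 2) : 0 ≤ distort w α δ b := by
  unfold distort
  split_ifs with h₁ h₂ h₃ h₄
  · exact le_rfl
  · exact div_nonneg hw (by linarith)
  · exact hw
  · exact div_nonneg (mul_nonneg hw (by linarith)) (mul_nonneg hα (by linarith))
  · exact div_nonneg (mul_nonneg hw (by linarith)) (mul_nonneg hα (by linarith))

theorem distort_le {w α δ : ℝ} (b : Prop) [Decidable b] (hw : 0 ≤ w) (hα : 0 ≤ α) (hδ0 : 0 ≤ δ)
    (hδ : δ ≤ 1 / 2) : distort w α δ b ≤ w * (1 - δ)⁻¹ := by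
  have h1δ : 0 < 1 - δ := by linarith
  have hone : 1 ≤ (1 - δ)⁻¹ := (one_le_inv₀ h1δ).mpr (by linarith)
  unfold distort
  split_ifs with h₁ h₂ h₃ h₄
  · positivity
  · rw [div_eq_mul_inv]
    gcongr
  · exact le_mul_of_one_le_right hw hone
  · have hα' : 0 < α := lt_of_le_of_ne hα (Ne.symm h₃)
    rw [div_le_iff₀ (by positivity)]
    have : w * (1 - δ)⁻¹ * (α * (1 - δ)) = w * α := by field_simp
    rw [this]
    exact mul_le_mul_of_nonneg_left (by linarith) hw
  · have hα' : 0 < α := lt_of_le_of_ne hα (Ne.symm h₃)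
    rw [div_le_iff₀ (by positivity)]
    have : w * (1 - δ)⁻¹ * (α * (1 - δ)) = w * α := by field_simp
    rw [this]
    exact mul_le_mul_of_nonneg_left (by linarith) hw

/-- The distortion preserves the mass of a fibre `F` on which the old weight is constant. -/
theorem sum_distort {X : Type*} (F B : Finset X) (w α δ : ℝ) (hF : F.Nonempty)
    (hα : α = ((F ∩ B).card : ℝ) / (F.card : ℝ)) (hδ : δ ≤ 1 / 2) :
    ∑ x ∈ F, distort w α δ (x ∈ B) = ∑ _x ∈ F, w := by
  have hN : (F.card : ℝ) ≠ 0 := by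
    exact_mod_cast hF.card_pos.ne'
  have hk : ((F ∩ B).card : ℝ) = α * F.card := by rw [hα]; field_simp
  have hB : ∑ x ∈ F, (if x ∈ B then (1 : ℝ) else 0) = α * F.card := by
    rw [← hk]
    simp [Finset.sum_ite_mem]
  unfold distort
  split_ifs with h₁ h₂
  · have h1 : 1 - α ≠ 0 := by linarith
    have e : ∀ x, (if x ∈ B then 0 else w / (1 - α)) =
        w / (1 - α) - w / (1 - α) * (if x ∈ B then (1 : ℝ) else 0) := by
      intro x; split_ifs <;> simp
    simp only [e, Finset.sum_sub_distrib, ← Finset.mul_sum, hB]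
    simp
    field_simp
  · rfl
  · have h1 : 1 - δ ≠ 0 := by linarith
    have e : ∀ x, w * (α - (if x ∈ B then δ else 0)) / (α * (1 - δ)) =
        w / (1 - δ) - w * δ / (α * (1 - δ)) * (if x ∈ B then (1 : ℝ) else 0) := by
      intro x; split_ifs <;> field_simp <;> simp
    simp only [e, Finset.sum_sub_distrib, ← Finset.mul_sum, hB]
    simp
    field_simp

/-! ### Ideals of the ring of integers -/

/-- In `𝓞 K ⧸ Q`, a class modulo a divisor `I` of `Q` has density `1 / N(I)`. -/
theorem card_map_mk_div {K : Type*} [Field K] [NumberField K] (Q I : Ideal (𝓞 K)) (hI : I ∣ Q)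
    [Fintype (𝓞 K ⧸ Q)] :
    (Fintype.card (I.map (Ideal.Quotient.mk Q)) : ℝ) * (1 / (Fintype.card (𝓞 K ⧸ Q) : ℝ)) =
      1 / (Ideal.absNorm I : ℝ) := by
  have hle : Q ≤ I := Ideal.le_of_dvd hI
  have h1 := Submodule.card_eq_card_quotient_mul_card (I.map (Ideal.Quotient.mk Q))
  have h2 : Nat.card ((𝓞 K ⧸ Q) ⧸ I.map (Ideal.Quotient.mk Q)) = Ideal.absNorm I := by
    rw [Ideal.absNorm_apply, Submodule.cardQuot_apply]
    exact Nat.card_congr (DoubleQuot.quotQuotEquivQuotOfLE hle).toEquiv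
  have h0 : (Fintype.card (𝓞 K ⧸ Q) : ℝ) ≠ 0 := by
    exact_mod_cast Fintype.card_ne_zero
  have h3 : (Fintype.card (𝓞 K ⧸ Q) : ℝ) =
      Ideal.absNorm I * Fintype.card (I.map (Ideal.Quotient.mk Q)) := by
    rw [← Nat.card_eq_fintype_card, ← Nat.card_eq_fintype_card, ← h2, h1]
    push_cast
    first | rfl | ring
  have h4 : (Ideal.absNorm I : ℝ) ≠ 0 := by
    intro h; rw [h, zero_mul] at h3; exact h0 h3
  rw [mul_one_div, div_eq_div_iff h0 h4, h3]
  ring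

theorem sup_pow_eq_top_of_not_dvd {K : Type*} [Field K] [NumberField K] {I p : Ideal (𝓞 K)}
    (hp : p.IsPrime) (hp0 : p ≠ ⊥) (h : ¬ p ∣ I) (k : ℕ) : I ⊔ p ^ k = ⊤ := by
  have hmax : p.IsMaximal := hp.isMaximal hp0
  have : I ⊔ p = ⊤ := by
    rw [sup_comm]
    exact hmax.1.2 _ (lt_of_le_of_ne le_sup_left fun he =>
      h (Ideal.dvd_iff_le.mpr (he ▸ le_sup_right)))
  exact Ideal.sup_pow_eq_top this

/-! ### The bound -/

/-- Upper bound for the `P_j`-measure of a congruence class modulo a divisor of `Q`. -/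
theorem measure_congruence_class_bound
    {K : Type*} [Field K] [NumberField K]
    (n : ℕ) (hn : 0 < n)
    (a : Fin n → 𝓞 K) (Idl : Fin n → Ideal (𝓞 K))
    (hdist : ∀ i : Fin n, Distinguishable (Idl i))
    (hmono : ∀ i j : Fin n, i ≤ j → Ideal.absNorm (Idl i) ≤ Ideal.absNorm (Idl j))
    (s : ℕ)
    (hsle : ∀ I₀ : Ideal (𝓞 K), (Finset.univ.filter fun i : Fin n => Idl i = I₀).card ≤ s)
    (hseq : ∃ I₀ : Ideal (𝓞 K), (Finset.univ.filter fun i : Fin n => Idl i = I₀).card = s)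
    (Q : Ideal (𝓞 K)) (hQ : Q = ⨅ i : Fin n, Idl i)
    (J : ℕ) (p : ℕ → Ideal (𝓞 K)) (ν : ℕ → ℕ)
    (hp : ∀ j ∈ Finset.Icc 1 J, (p j).IsPrime)
    (hν : ∀ j ∈ Finset.Icc 1 J, 1 ≤ ν j)
    (hpinj : ∀ j ∈ Finset.Icc 1 J, ∀ j' ∈ Finset.Icc 1 J, p j = p j' → j = j')
    (hfact : Q = ∏ j ∈ Finset.Icc 1 J, p j ^ ν j)
    (hpmono : ∀ j ∈ Finset.Icc 1 J, ∀ j' ∈ Finset.Icc 1 J, j ≤ j' →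
      Ideal.absNorm (p j) ≤ Ideal.absNorm (p j'))
    (Qp : ℕ → Ideal (𝓞 K)) (hQp : ∀ j : ℕ, Qp j = ∏ i ∈ Finset.Icc 1 j, p i ^ ν i)
    [Fintype (𝓞 K ⧸ Q)]
    (B : ℕ → Finset (𝓞 K ⧸ Q))
    (hB : ∀ j ∈ Finset.Icc 1 J, B j = Finset.univ.filter fun x : 𝓞 K ⧸ Q =>
      ∃ i : Fin n, IsPmin (Idl i) (p j) ∧
        x - Ideal.Quotient.mk Q (a i) ∈ (Idl i).map (Ideal.Quotient.mk Q))
    (F : ℕ → (𝓞 K ⧸ Q) → Finset (𝓞 K ⧸ Q))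
    (hF : ∀ (j : ℕ) (x : 𝓞 K ⧸ Q),
      F j x = Finset.univ.filter fun x' : 𝓞 K ⧸ Q => x' - x ∈ (Qp j).map (Ideal.Quotient.mk Q))
    (α : ℕ → (𝓞 K ⧸ Q) → ℝ)
    (hα : ∀ j ∈ Finset.Icc 1 J, ∀ x : 𝓞 K ⧸ Q,
      α j x = ((F (j - 1) x ∩ B j).card : ℝ) / ((F (j - 1) x).card : ℝ))
    (δ : ℕ → ℝ) (hδ : ∀ j ∈ Finset.Icc 1 J, δ j ∈ Set.Icc (0 : ℝ) (1 / 2))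
    (P : ℕ → (𝓞 K ⧸ Q) → ℝ)
    (hP0 : ∀ x : 𝓞 K ⧸ Q, P 0 x = 1 / (Fintype.card (𝓞 K ⧸ Q) : ℝ))
    (hPrec : ∀ j ∈ Finset.Icc 1 J, ∀ x : 𝓞 K ⧸ Q,
      P j x = if α j x < δ j then (if x ∈ B j then 0 else P (j - 1) x / (1 - α j x))
        else if α j x = 0 then P (j - 1) x
        else P (j - 1) x * (α j x - (if x ∈ B j then δ j else 0)) / (α j x * (1 - δ j)))
    :
    ∀ j ≤ J, ∀ a₀ : 𝓞 K, ∀ I : Ideal (𝓞 K), I ≠ ⊥ → I ∣ Q →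
      ∑ x ∈ Finset.univ.filter
          (fun x : 𝓞 K ⧸ Q => x - Ideal.Quotient.mk Q a₀ ∈ I.map (Ideal.Quotient.mk Q)),
        P j x ≤
      (1 / (Ideal.absNorm I : ℝ)) *
        ∏ i ∈ (Finset.Icc 1 j).filter (fun i => p i ∣ I), (1 - δ i)⁻¹ := by
  classical
  -- `q j` is the image of `Q_j`; the fibres of `π_j` are its cosets.
  set q : ℕ → Ideal (𝓞 K ⧸ Q) := fun j => (Qp j).map (Ideal.Quotient.mk Q) with hq
  have hQ0 : Q ≠ ⊥ := by
    intro h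
    have := (Ideal.absNorm_ne_zero_iff Q).mpr inferInstance
    exact this (by rw [h, Ideal.absNorm_bot])
  have hp0 : ∀ j ∈ Finset.Icc 1 J, p j ≠ ⊥ := by
    intro j hj h
    apply hQ0
    rw [hfact, ← Ideal.zero_eq_bot]
    refine Finset.prod_eq_zero hj ?_
    rw [h, ← Ideal.zero_eq_bot]
    exact zero_pow (by have := hν j hj; omega)
  have hQp_succ : ∀ j, Qp (j + 1) = Qp j * p (j + 1) ^ ν (j + 1) := by
    intro j
    rw [hQp, hQp, Finset.prod_Icc_succ_top (by omega)]
  have hq_succ : ∀ j, q (j + 1) ≤ q j := by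
    intro j
    exact Ideal.map_mono (by rw [hQp_succ]; exact Ideal.mul_le_left)
  have hsup : ∀ j, j + 1 ∈ Finset.Icc 1 J → ∀ I : Ideal (𝓞 K), ¬ p (j + 1) ∣ I →
      I.map (Ideal.Quotient.mk Q) ⊔ q (j + 1) = I.map (Ideal.Quotient.mk Q) ⊔ q j := by
    intro j hj I hI
    rw [hq]
    simp only
    rw [← Ideal.map_sup, ← Ideal.map_sup, hQp_succ, Ideal.sup_mul_eq_of_coprime_right
      (sup_pow_eq_top_of_not_dvd (hp _ hj) (hp0 _ hj) hI _)]
  -- An ideal `I_i` whose top prime is `p_j` involves only `p_1, …, p_j`, hence divides `Q_j`.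
  have hIdl : ∀ j ∈ Finset.Icc 1 J, ∀ i : Fin n, IsPmin (Idl i) (p j) → Qp j ≤ Idl i := by
    intro j hj i hi
    rw [Finset.mem_Icc] at hj
    have hsplit : Q = (∏ k ∈ Finset.Ioc j J, p k ^ ν k) * Qp j := by
      rw [hfact, hQp, mul_comm]
      have hu : Finset.Icc 1 J = Finset.Icc 1 j ∪ Finset.Ioc j J := by
        ext k; simp only [Finset.mem_Icc, Finset.mem_union, Finset.mem_Ioc]; omega
      rw [hu, Finset.prod_union]
      rw [Finset.disjoint_left]
      intro k; simp only [Finset.mem_Icc, Finset.mem_Ioc]; omega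
    have hcop : Idl i ⊔ ∏ k ∈ Finset.Ioc j J, p k ^ ν k = ⊤ := by
      refine Ideal.sup_prod_eq_top fun k hk => ?_
      rw [Finset.mem_Ioc] at hk
      have hkJ : k ∈ Finset.Icc 1 J := Finset.mem_Icc.mpr (by omega)
      have hjJ : j ∈ Finset.Icc 1 J := Finset.mem_Icc.mpr hj
      refine sup_pow_eq_top_of_not_dvd (hp k hkJ) (hp0 k hkJ) (fun hd => ?_) _
      have hlt := hi.2.2 (p k) (hp k hkJ) hd (fun he => by
        have := hpinj k hkJ j hjJ he
        omega)
      have hle := hpmono j hjJ k hkJ hk.1.le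
      omega
    have hQle : Q ≤ Idl i := hQ ▸ iInf_le _ i
    have := Ideal.sup_mul_eq_of_coprime_left (K := Qp j) hcop
    rw [← hsplit, sup_eq_left.mpr hQle] at this
    rw [this]
    exact le_sup_right
  have hBinv : ∀ j ∈ Finset.Icc 1 J, ∀ x, ∀ h ∈ q j, (x + h ∈ B j ↔ x ∈ B j) := by
    have hdir : ∀ j ∈ Finset.Icc 1 J, ∀ x, ∀ h ∈ q j, x ∈ B j → x + h ∈ B j := by
      intro j hj x h hh hx
      rw [hB j hj, Finset.mem_filter] at hx ⊢
      obtain ⟨-, i, hi, hx⟩ := hx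
      refine ⟨Finset.mem_univ _, i, hi, ?_⟩
      have e : x + h - Ideal.Quotient.mk Q (a i) = (x - Ideal.Quotient.mk Q (a i)) + h := by ring
      rw [e]
      exact Ideal.add_mem _ hx (Ideal.map_mono (hIdl j hj i hi) hh)
    intro j hj x h hh
    refine ⟨fun hx => ?_, hdir j hj x h hh⟩
    have := hdir j hj _ (-h) (neg_mem hh) hx
    simpa using this
  have hFinv : ∀ j x, ∀ h ∈ q j, F j (x + h) = F j x := by
    intro j x h hh
    rw [hF, hF]
    ext y
    simp only [Finset.mem_filter, Finset.mem_univ, true_and]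
    have e : y - (x + h) = (y - x) - h := by ring
    rw [e]
    exact ⟨fun hy => by simpa using (q j).add_mem hy hh, fun hy => (q j).sub_mem hy hh⟩
  have hαinv : ∀ j, j + 1 ∈ Finset.Icc 1 J → ∀ x, ∀ h ∈ q j, α (j + 1) (x + h) = α (j + 1) x := by
    intro j hj x h hh
    rw [hα _ hj, hα _ hj, Nat.add_sub_cancel, hFinv j x h hh]
  have hα0 : ∀ j ∈ Finset.Icc 1 J, ∀ x, 0 ≤ α j x := by
    intro j hj x
    rw [hα j hj]
    positivity
  have hstep : ∀ j, j + 1 ∈ Finset.Icc 1 J → ∀ x,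
      P (j + 1) x = distort (P j x) (α (j + 1) x) (δ (j + 1)) (x ∈ B (j + 1)) := by
    intro j hj x
    rw [hPrec _ hj, Nat.add_sub_cancel]
    rfl
  -- `P_j` depends only on the class modulo `Q_j`.
  have hPinv : ∀ j ≤ J, ∀ x, ∀ h ∈ q j, P j (x + h) = P j x := by
    intro j
    induction j with
    | zero => intro _ x h _; rw [hP0, hP0]
    | succ j ih =>
      intro hj x h hh
      have hj' : j + 1 ∈ Finset.Icc 1 J := Finset.mem_Icc.mpr (by omega)
      rw [hstep j hj', hstep j hj', ih (by omega) x h (hq_succ j hh),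
        hαinv j hj' x h (hq_succ j hh)]
      simp only [hBinv _ hj' x h hh]
  have hPnonneg : ∀ j ≤ J, ∀ x, 0 ≤ P j x := by
    intro j
    induction j with
    | zero => intro _ x; rw [hP0]; positivity
    | succ j ih =>
      intro hj x
      have hj' : j + 1 ∈ Finset.Icc 1 J := Finset.mem_Icc.mpr (by omega)
      rw [hstep j hj']
      exact distort_nonneg _ (ih (by omega) x) (hα0 _ hj' x) (hδ _ hj').2
  have hmass : ∀ j, j + 1 ∈ Finset.Icc 1 J → ∀ x,
      cosetSum (q j) x (P (j + 1)) = cosetSum (q j) x (P j) := by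
    intro j hj x
    have hjJ : j ≤ J := by have := (Finset.mem_Icc.mp hj).2; omega
    have hFx : ∀ f, cosetSum (q j) x f = ∑ y ∈ F j x, f y := by
      intro f
      rw [hF]
      rfl
    have hmem : ∀ y ∈ F j x, y = x + (y - x) ∧ y - x ∈ q j := by
      intro y hy
      rw [hF, Finset.mem_filter] at hy
      exact ⟨by ring, hy.2⟩
    rw [hFx, hFx]
    have e1 : ∑ y ∈ F j x, P (j + 1) y =
        ∑ y ∈ F j x, distort (P j x) (α (j + 1) x) (δ (j + 1)) (y ∈ B (j + 1)) := by
      refine Finset.sum_congr rfl fun y hy => ?_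
      obtain ⟨hy1, hy2⟩ := hmem y hy
      rw [hstep j hj y]
      have hPy : P j y = P j x := by rw [hy1]; exact hPinv j hjJ x _ hy2
      have hαy : α (j + 1) y = α (j + 1) x := by rw [hy1]; exact hαinv j hj x _ hy2
      rw [hPy, hαy]
    have e2 : ∑ y ∈ F j x, P j y = ∑ _y ∈ F j x, P j x := by
      refine Finset.sum_congr rfl fun y hy => ?_
      obtain ⟨hy1, hy2⟩ := hmem y hy
      rw [hy1]; exact hPinv j hjJ x _ hy2
    rw [e1, e2]
    refine sum_distort _ _ _ _ _ ⟨x, ?_⟩ ?_ (hδ _ hj).2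
    · rw [hF]; simp
    · rw [hα _ hj, Nat.add_sub_cancel]
  intro j
  induction j with
  | zero =>
    intro _ a₀ I _ hIQ
    have h1 := cosetSum_one (I.map (Ideal.Quotient.mk Q)) (Ideal.Quotient.mk Q a₀)
    unfold cosetSum at h1
    simp only [hP0]
    rw [← card_map_mk_div Q I hIQ, ← h1, Finset.sum_mul]
    simp
  | succ j ih =>
    intro hj a₀ I hI0 hIQ
    have hj' : j + 1 ∈ Finset.Icc 1 J := Finset.mem_Icc.mpr (by omega)
    have hI := ih (by omega) a₀ I hI0 hIQ
    rw [← Finset.insert_Icc_right_eq_Icc_add_one (by omega), Finset.filter_insert]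
    split_ifs with hd
    · -- When `p_{j+1} ∣ I`, the pointwise bound `P_{j+1} ≤ P_j / (1 - δ_{j+1})` suffices.
      rw [Finset.prod_insert (by simp)]
      have h1δ : 0 < 1 - δ (j + 1) := by linarith [(hδ _ hj').2]
      calc _ ≤ ∑ x ∈ Finset.univ.filter (fun x : 𝓞 K ⧸ Q =>
              x - Ideal.Quotient.mk Q a₀ ∈ I.map (Ideal.Quotient.mk Q)),
              P j x * (1 - δ (j + 1))⁻¹ := by
            refine Finset.sum_le_sum fun x _ => ?_
            rw [hstep j hj']
            exact distort_le _ (hPnonneg j (by omega) x) (hα0 _ hj' x) (hδ _ hj').1 (hδ _ hj').2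
        _ ≤ _ := by
            rw [← Finset.sum_mul]
            refine (mul_le_mul_of_nonneg_right hI (by positivity)).trans (le_of_eq ?_)
            ring
    · -- When `p_{j+1} ∤ I`, the class of `a₀` modulo `I` keeps its mass.
      refine le_trans (le_of_eq ?_) hI
      exact cosetSum_congr_of_sup_eq (hsup j hj' I hd) (P (j + 1)) (P j) (hPinv _ hj)
        (fun x l hl => hPinv j (by omega) x l (hq_succ j hl)) (hmass j hj') _
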